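/- Let ε > 0, c ∈ (0, 1/2], and p, q ∈ [0,1]^S with P = P_p and Q = P_q. Suppose: (i) min_{k∈{1,…,m}} Pr_P[Π_k] ≥ 2ε; (ii) either every entry of p lies in [c, 1−c] or every entry of q lies in [c, 1−c]; and (iii) (3/c)·√(Σ_{k=1}^m Pr_P[Π_k]·(p_k − q_k)²) ≤ ε. Then d_TV(P, Q) ≤ ε. -/

import Mathlib

open scoped BigOperators Classical

/-- The index set `S` of parental configurations: pairs `(i, a)` where
`a : Parents i → Bool`. -/
abbrev BNIdx (d : ℕ) (Par : Fin d → Finset (Fin d)) :=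
  (i : Fin d) × ({j : Fin d // j ∈ Par i} → Bool)

/-- The restriction of `x ∈ {0,1}^d` to the parents of node `i`. -/
def cfgOf {d : ℕ} (Par : Fin d → Finset (Fin d)) (x : Fin d → Bool) (i : Fin d) :
    {j : Fin d // j ∈ Par i} → Bool :=
  fun j => x j.1

/-- The Bayesian network `P_p` with conditional probability table `p`. -/
noncomputable def bnDist {d : ℕ} (Par : Fin d → Finset (Fin d))
    (p : BNIdx d Par → ℝ) (x : Fin d → Bool) : ℝ :=
  ∏ i : Fin d, if x i then p ⟨i, cfgOf Par x i⟩ else 1 - p ⟨i, cfgOf Par x i⟩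

/-- `Pr_R[Π_k]`, the probability of the parental configuration `k` under `R`. -/
noncomputable def prCfg {d : ℕ} (Par : Fin d → Finset (Fin d))
    (R : (Fin d → Bool) → ℝ) (k : BNIdx d Par) : ℝ :=
  ∑ x : Fin d → Bool, if cfgOf Par x k.1 = k.2 then R x else 0

/-- Probability of an event `A` under `R`. -/
noncomputable def prEvent {d : ℕ} (R : (Fin d → Bool) → ℝ)
    (A : (Fin d → Bool) → Prop) : ℝ :=
  ∑ x : Fin d → Bool, if A x then R x else 0

/-- Expectation `E_{X ∼ R}[g(X)]`. -/
noncomputable def expec {d : ℕ} (R : (Fin d → Bool) → ℝ)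
    (g : (Fin d → Bool) → ℝ) : ℝ :=
  ∑ x : Fin d → Bool, R x * g x

/-- The vector `F(x, q) ∈ ℝ^S`. -/
noncomputable def Fvec {d : ℕ} (Par : Fin d → Finset (Fin d))
    (x : Fin d → Bool) (q : BNIdx d Par → ℝ) (k : BNIdx d Par) : ℝ :=
  if cfgOf Par x k.1 = k.2 then (if x k.1 then 1 else 0) else q k

/-- `R` is a probability distribution on the finite set `D`. -/
def IsProbDist {D : Type*} [Fintype D] (R : D → ℝ) : Prop :=
  (∀ x, 0 ≤ R x) ∧ ∑ x, R x = 1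

/-- Total variation distance. -/
noncomputable def dTV {D : Type*} [Fintype D] (A B : D → ℝ) : ℝ :=
  (∑ x, |A x - B x|) / 2

/-- Squared Hellinger distance `d_H(A,B)² = 1 - Σ √(A(x)·B(x))`. -/
noncomputable def hellingerSq {D : Type*} [Fintype D] (A B : D → ℝ) : ℝ :=
  1 - ∑ x, Real.sqrt (A x * B x)

/-- Euclidean norm on `ℝ^ι`. -/
noncomputable def enorm2 {ι : Type*} [Fintype ι] (v : ι → ℝ) : ℝ :=
  Real.sqrt (∑ k, v k ^ 2)

/-- The second-moment matrix `M_R` (relative to `q`). -/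
noncomputable def covM {d : ℕ} (Par : Fin d → Finset (Fin d))
    (R : (Fin d → Bool) → ℝ) (q : BNIdx d Par → ℝ) :
    Matrix (BNIdx d Par) (BNIdx d Par) ℝ :=
  fun k l => expec R (fun x => (Fvec Par x q k - q k) * (Fvec Par x q l - q l))

/-- `M_R^0`: the matrix `M_R` with zeroed diagonal. -/
noncomputable def covM0 {d : ℕ} (Par : Fin d → Finset (Fin d))
    (R : (Fin d → Bool) → ℝ) (q : BNIdx d Par → ℝ) :
    Matrix (BNIdx d Par) (BNIdx d Par) ℝ :=
  fun k l => if k = l then 0 else covM Par R q k l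

/-- Spectral norm (ℓ²-operator norm) of a real matrix. -/
noncomputable def specNorm {ι : Type*} [Fintype ι] [DecidableEq ι]
    (M : Matrix ι ι ℝ) : ℝ :=
  ‖Matrix.toEuclideanCLM (𝕜 := ℝ) M‖

/-!
Let `M_s = ∏ j ∈ s, Q_j / P_j` be the likelihood ratio of the coordinates in `s`. Under `P` it is a
martingale as the coordinates are revealed in increasing order, and the total variation distance is
`E_P[max (1 - M) 0] ≤ √E_P[max (1 - M) 0 ^ 2]`. The potential `φ t = max (1 - t) 0 ^ 2` satisfies
`φ (t * w) ≤ φ t + 2 * t * max (1 - t) 0 * (1 - w) + (1 - w) ^ 2 / max 1 w` for all `t, w ≥ 0`.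
Since the linear term has mean zero, revealing coordinate `i` raises `E_P[φ M]` by at most the
expectation of `∑ a, (p a - q a) ^ 2 / max (p a) (q a)`, where `p` and `q` are the conditional laws
of that coordinate. For Bernoulli laws this is at most `2 / c * (p - q) ^ 2` as soon as one of them
is bounded away from `0` and `1` by `c`.
-/

section DependsOn

variable {ι : Type*} {α : ι → Type*}

theorem apply_update_of_dependsOn [DecidableEq ι] {β : Type*} {s : Set ι} {f : (∀ i, α i) → β}
    (hf : DependsOn f s) {i : ι} (hi : i ∉ s) (x : ∀ i, α i) (a : α i) :
    f (Function.update x i a) = f x :=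
  hf fun _ hj ↦ Function.update_of_ne (ne_of_mem_of_not_mem hj hi) _ _

theorem dependsOn_mul {R : Type*} [Mul R] {s : Set ι} {f g : (∀ i, α i) → R}
    (hf : DependsOn f s) (hg : DependsOn g s) : DependsOn (fun x ↦ f x * g x) s :=
  fun _ _ hxy ↦ congrArg₂ (· * ·) (hf hxy) (hg hxy)

theorem dependsOn_div {R : Type*} [Div R] {s : Set ι} {f g : (∀ i, α i) → R}
    (hf : DependsOn f s) (hg : DependsOn g s) : DependsOn (fun x ↦ f x / g x) s :=
  fun _ _ hxy ↦ congrArg₂ (· / ·) (hf hxy) (hg hxy)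

theorem dependsOn_prod {κ R : Type*} [CommMonoid R] {s : Set ι} (t : Finset κ)
    {f : κ → (∀ i, α i) → R} (hf : ∀ j ∈ t, DependsOn (f j) s) :
    DependsOn (fun x ↦ ∏ j ∈ t, f j x) s :=
  fun _ _ hxy ↦ Finset.prod_congr rfl fun j hj ↦ hf j hj hxy

theorem involutive_update_swap [DecidableEq ι] (i : ι) :
    Function.Involutive fun z : (∀ i, α i) × α i ↦ (Function.update z.1 i z.2, z.1 i) :=
  fun z ↦ by simp

variable [Fintype ι] [DecidableEq ι] [∀ i, Fintype (α i)]

theorem sum_sum_update {M : Type*} [AddCommMonoid M] (i : ι) (f : (∀ i, α i) → M) :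
    ∑ x, ∑ a, f (Function.update x i a) = Fintype.card (α i) • ∑ x, f x := by
  calc ∑ x, ∑ a, f (Function.update x i a)
      = ∑ z : (∀ i, α i) × α i, f (Function.update z.1 i z.2) :=
        (Fintype.sum_prod_type' fun x a ↦ f (Function.update x i a)).symm
    _ = ∑ z : (∀ i, α i) × α i, f z.1 :=
        Function.Bijective.sum_comp (involutive_update_swap i).bijective fun z ↦ f z.1
    _ = Fintype.card (α i) • ∑ x, f x := by simp [Fintype.sum_prod_type, Finset.sum_nsmul]

theorem sum_mul_sum_update {R : Type*} [CommSemiring R] {i : ι} {f : (∀ i, α i) → R}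
    (hf : DependsOn f {i}ᶜ) (g : (∀ i, α i) → R) :
    ∑ x, f x * ∑ a, g (Function.update x i a) = Fintype.card (α i) * ∑ x, f x * g x := by
  have hf_update := apply_update_of_dependsOn hf (by simp : i ∉ ({i}ᶜ : Set ι))
  rw [← nsmul_eq_mul, ← sum_sum_update]
  simp only [hf_update, Finset.mul_sum]

end DependsOn

section TotalVariation

variable {D : Type*} [Fintype D] {A B : D → ℝ}

theorem dTV_eq_sum_max_sub (h : ∑ x, A x = ∑ x, B x) : dTV A B = ∑ x, max (A x - B x) 0 := by
  have habs (x : D) : |A x - B x| = 2 * max (A x - B x) 0 - (A x - B x) := by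
    rcases le_total 0 (A x - B x) with hx | hx
    · rw [abs_of_nonneg hx, max_eq_left hx]
      ring
    · rw [abs_of_nonpos hx, max_eq_right hx]
      ring
  simp only [dTV, habs, Finset.sum_sub_distrib, ← Finset.mul_sum, h]
  ring

theorem dTV_sq_le_sum_sq_max_one_sub_div (hA : IsProbDist A) (hB : IsProbDist B) :
    dTV A B ^ 2 ≤ ∑ x, max (1 - B x / A x) 0 ^ 2 * A x := by
  have hmax (x : D) : max (A x - B x) 0 = max (1 - B x / A x) 0 * A x := by
    rcases eq_or_ne (A x) 0 with hx | hx
    · simp [hx, hB.1 x]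
    · rw [max_mul_of_nonneg _ _ (hA.1 x), zero_mul, sub_mul, one_mul, div_mul_cancel₀ _ hx]
  calc dTV A B ^ 2
      = (∑ x, max (1 - B x / A x) 0 * A x) ^ 2 := by
        simp only [dTV_eq_sum_max_sub (hA.2.trans hB.2.symm), hmax]
    _ ≤ (∑ x, max (1 - B x / A x) 0 ^ 2 * A x) * ∑ x, A x :=
        Finset.sum_sq_le_sum_mul_sum_of_sq_le_mul _
          (fun x _ ↦ mul_nonneg (sq_nonneg _) (hA.1 x)) (fun x _ ↦ hA.1 x)
          (fun x _ ↦ le_of_eq (by ring))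
    _ = ∑ x, max (1 - B x / A x) 0 ^ 2 * A x := by rw [hA.2, mul_one]

end TotalVariation

section Potential

theorem sq_max_one_sub_mul_le_of_le_one {t w : ℝ} (ht : 0 ≤ t) (hw : 0 ≤ w) (hw1 : w ≤ 1) :
    max (1 - t * w) 0 ^ 2
      ≤ max (1 - t) 0 ^ 2 + 2 * (t * max (1 - t) 0) * (1 - w) + (1 - w) ^ 2 := by
  rcases le_total t 1 with ht1 | ht1
  · have hquad : t ^ 2 * (1 - w) ^ 2 ≤ (1 - w) ^ 2 :=
      mul_le_of_le_one_left (sq_nonneg _) (pow_le_one₀ ht ht1)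
    rw [max_eq_left (sub_nonneg.2 (mul_le_one₀ ht1 hw hw1)), max_eq_left (sub_nonneg.2 ht1)]
    linarith
  · have hmax : max (1 - t * w) 0 ≤ 1 - w :=
      max_le (sub_le_sub_left (le_mul_of_one_le_left hw ht1) 1) (sub_nonneg.2 hw1)
    have hsq := pow_le_pow_left₀ (le_max_right _ _) hmax 2
    rw [max_eq_right (sub_nonpos.2 ht1)]
    linarith

theorem sq_max_one_sub_mul_le_of_one_le {t w : ℝ} (ht : 0 ≤ t) (hw : 1 ≤ w) :
    max (1 - t * w) 0 ^ 2
      ≤ max (1 - t) 0 ^ 2 + 2 * (t * max (1 - t) 0) * (1 - w) + (1 - w) ^ 2 / w := by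
  have hw_pos : 0 < w := one_pos.trans_le hw
  have ht_le : t ≤ t * w := le_mul_of_one_le_right ht hw
  rcases le_total (t * w) 1 with htw | htw
  · have hquad : t ^ 2 * (1 - w) ^ 2 ≤ (1 - w) ^ 2 / w := by
      rw [le_div_iff₀ hw_pos, mul_right_comm]
      refine mul_le_of_le_one_left (sq_nonneg _) ?_
      rw [sq, mul_assoc]
      exact mul_le_one₀ (ht_le.trans htw) (by positivity) htw
    rw [max_eq_left (sub_nonneg.2 htw), max_eq_left (sub_nonneg.2 (ht_le.trans htw))]
    linarith
  · rw [max_eq_right (sub_nonpos.2 htw), zero_pow two_ne_zero]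
    rcases le_total t 1 with ht1 | ht1
    · have hsos : (1 - t) ^ 2 + 2 * (t * (1 - t)) * (1 - w) + (1 - w) ^ 2 / w
          = ((w * (1 - t) - (w - 1)) ^ 2 + (1 - t) ^ 2 * (w * (w - 1))) / w := by
        field_simp
        ring
      have hww : 0 ≤ w * (w - 1) := mul_nonneg hw_pos.le (sub_nonneg.2 hw)
      rw [max_eq_left (sub_nonneg.2 ht1), hsos]
      exact div_nonneg (add_nonneg (sq_nonneg _) (mul_nonneg (sq_nonneg _) hww)) hw_pos.le
    · rw [max_eq_right (sub_nonpos.2 ht1)]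
      have hquot : 0 ≤ (1 - w) ^ 2 / w := by positivity
      linarith

theorem sq_max_one_sub_mul_le {t w : ℝ} (ht : 0 ≤ t) (hw : 0 ≤ w) :
    max (1 - t * w) 0 ^ 2
      ≤ max (1 - t) 0 ^ 2 + 2 * (t * max (1 - t) 0) * (1 - w) + (1 - w) ^ 2 / max 1 w := by
  rcases le_total w 1 with hw1 | hw1
  · simpa only [max_eq_left hw1, div_one] using sq_max_one_sub_mul_le_of_le_one ht hw hw1
  · simpa only [max_eq_right hw1] using sq_max_one_sub_mul_le_of_one_le ht hw1

theorem sq_max_one_sub_mul_div_mul_le {t p q : ℝ} (ht : 0 ≤ t) (hp : 0 ≤ p) (hq : 0 ≤ q) :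
    max (1 - t * (q / p)) 0 ^ 2 * p
      ≤ max (1 - t) 0 ^ 2 * p + 2 * (t * max (1 - t) 0) * (p - q) + (p - q) ^ 2 / max p q := by
  rcases hp.eq_or_lt with rfl | hp
  · have hlin : t * max (1 - t) 0 ≤ 1 / 2 := by
      rcases le_total t 1 with ht1 | ht1
      · rw [max_eq_left (by linarith)]
        nlinarith [sq_nonneg (t - 1 / 2)]
      · rw [max_eq_right (by linarith)]
        norm_num
    have hquot : (0 - q) ^ 2 / max 0 q = q := by
      rw [max_eq_right hq, zero_sub, neg_sq, sq, mul_self_div_self]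
    rw [hquot]
    nlinarith
  · have hmax : max 1 (q / p) * p = max p q := by
      rw [max_mul_of_nonneg _ _ hp.le, one_mul, div_mul_cancel₀ _ hp.ne']
    have hquot : (1 - q / p) ^ 2 / max 1 (q / p) * p = (p - q) ^ 2 / max p q := by
      rw [← hmax]
      field_simp
    calc max (1 - t * (q / p)) 0 ^ 2 * p
        ≤ (max (1 - t) 0 ^ 2 + 2 * (t * max (1 - t) 0) * (1 - q / p)
            + (1 - q / p) ^ 2 / max 1 (q / p)) * p :=
          mul_le_mul_of_nonneg_right (sq_max_one_sub_mul_le ht (by positivity)) hp.le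
      _ = max (1 - t) 0 ^ 2 * p + 2 * (t * max (1 - t) 0) * (p - q)
            + (p - q) ^ 2 / max p q := by
          rw [← hquot]
          field_simp

/-- A divergence between weights `p` and `q` on a finite type, obtained from the chi-square
divergence `∑ a, (p a - q a) ^ 2 / q a` by taking the larger of the two weights as denominator. It
is below both chi-square divergences, and terms with `p a = q a = 0` vanish since `0 / 0 = 0`. -/
noncomputable def maxChiSq {α : Type*} [Fintype α] (p q : α → ℝ) : ℝ :=
  ∑ a, (p a - q a) ^ 2 / max (p a) (q a)

theorem sum_sq_max_one_sub_mul_div_mul_le {α : Type*} [Fintype α] {p q : α → ℝ}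
    (hp : IsProbDist p) (hq : IsProbDist q) {t : ℝ} (ht : 0 ≤ t) :
    ∑ a, max (1 - t * (q a / p a)) 0 ^ 2 * p a ≤ max (1 - t) 0 ^ 2 + maxChiSq p q := by
  calc ∑ a, max (1 - t * (q a / p a)) 0 ^ 2 * p a
      ≤ ∑ a, (max (1 - t) 0 ^ 2 * p a + 2 * (t * max (1 - t) 0) * (p a - q a)
          + (p a - q a) ^ 2 / max (p a) (q a)) :=
        Finset.sum_le_sum fun a _ ↦ sq_max_one_sub_mul_div_mul_le ht (hp.1 a) (hq.1 a)
    _ = max (1 - t) 0 ^ 2 + maxChiSq p q := by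
        simp only [Finset.sum_add_distrib, ← Finset.mul_sum, Finset.sum_sub_distrib, hp.2, hq.2,
          sub_self, mul_one, mul_zero, add_zero, maxChiSq]

end Potential

theorem sqrt_two_div_mul_le_three_div_mul_sqrt {c : ℝ} (hc : c ∈ Set.Ioc 0 (1 / 2)) (X : ℝ) :
    √(2 / c * X) ≤ 3 / c * √X := by
  obtain ⟨hc_pos, hc_le⟩ := hc
  rw [Real.sqrt_mul (by positivity)]
  gcongr
  refine (Real.sqrt_le_left (by positivity)).2 ?_
  rw [div_pow, div_le_div_iff₀ hc_pos (by positivity)]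
  nlinarith

theorem prod_eq_prod_lt_mul_mul_prod_gt {ι M : Type*} [LinearOrder ι] [Fintype ι] [CommMonoid M]
    (i : ι) (f : ι → M) :
    ∏ j, f j = (∏ j with j < i, f j) * f i * ∏ j with i < j, f j := by
  have hle : Finset.univ.filter (¬ i < ·) = insert i (Finset.univ.filter (· < i)) := by
    ext j
    simp [le_iff_eq_or_lt]
  rw [← Finset.prod_filter_not_mul_prod_filter _ (i < ·), hle, Finset.prod_insert (by simp),
    mul_comm (f i)]

/-- `F i x` is the probability of the coordinate `x i` conditionally on the coordinates of `x`
preceding `i`, so that `∏ i, F i` is a probability distribution given by the chain rule. The factors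
take the whole tuple `x` as argument, with `dependsOn` saying that later coordinates are ignored. -/
structure IsSequentialKernel {ι : Type*} [LinearOrder ι] {α : ι → Type*} [∀ i, Fintype (α i)]
    (F : ι → (∀ i, α i) → ℝ) : Prop where
  dependsOn (i : ι) : DependsOn (F i) (Set.Iic i)
  isProbDist (i : ι) (x : ∀ i, α i) : IsProbDist fun a ↦ F i (Function.update x i a)

/-- The divergence `maxChiSq` between the laws of coordinate `i` under the conditional distributions
`F` and `G`, given the coordinates of `x` preceding `i`. -/
noncomputable def condMaxChiSq {ι : Type*} [DecidableEq ι] {α : ι → Type*} [∀ i, Fintype (α i)]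
    (F G : ι → (∀ i, α i) → ℝ) (i : ι) (x : ∀ i, α i) : ℝ :=
  maxChiSq (fun a ↦ F i (Function.update x i a)) (fun a ↦ G i (Function.update x i a))

namespace IsSequentialKernel

section Basic

variable {ι : Type*} [LinearOrder ι] {α : ι → Type*} [∀ i, Fintype (α i)]
  {F G : ι → (∀ i, α i) → ℝ}

theorem nonneg (hF : IsSequentialKernel F) (i : ι) (x : ∀ i, α i) : 0 ≤ F i x := by
  simpa using (hF.isProbDist i x).1 (x i)

theorem dependsOn_update (hF : IsSequentialKernel F) (i : ι) (a : α i) :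
    DependsOn (fun x ↦ F i (Function.update x i a)) (Set.Iio i) := by
  refine fun x y hxy ↦ hF.dependsOn i fun j hj ↦ ?_
  rcases hj.eq_or_lt with rfl | hj
  · simp
  · simp [Function.update_of_ne hj.ne, hxy j hj]

theorem dependsOn_condMaxChiSq (hF : IsSequentialKernel F) (hG : IsSequentialKernel G) (i : ι) :
    DependsOn (condMaxChiSq F G i) (Set.Iio i) := fun x y hxy ↦ by
  simp only [condMaxChiSq, hF.dependsOn_update i _ hxy, hG.dependsOn_update i _ hxy]

end Basic

variable {ι : Type*} [LinearOrder ι] [Fintype ι] {α : ι → Type*} [∀ i, Fintype (α i)]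
  {F G : ι → (∀ i, α i) → ℝ}

/-- Summing out the coordinates in `t`, on which `f` does not depend; the cardinalities count how
often each value of `f` recurs in the sum on the right. -/
theorem prod_card_mul_sum_mul_prod (hF : IsSequentialKernel F) (t : Finset ι)
    {f : (∀ i, α i) → ℝ} (hf : DependsOn f (↑t)ᶜ) :
    (∏ j ∈ t, (Fintype.card (α j) : ℝ)) * ∑ x, f x * ∏ j ∈ t, F j x = ∑ x, f x := by
  induction t using Finset.induction_on_max with
  | empty => simp
  | insert i s hi ih =>
    have his : i ∉ s := fun h ↦ (hi i h).false
    have hprod : DependsOn (fun x ↦ ∏ j ∈ s, F j x) {i}ᶜ :=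
      dependsOn_prod s fun j hj ↦
        (hF.dependsOn j).mono fun k (hk : k ≤ j) ↦ (hk.trans_lt (hi j hj)).ne
    have hfi : DependsOn (fun x ↦ f x * ∏ j ∈ s, F j x) {i}ᶜ :=
      dependsOn_mul (hf.mono (by simp)) hprod
    have hsum : Fintype.card (α i) * ∑ x, (f x * ∏ j ∈ s, F j x) * F i x
        = ∑ x, f x * ∏ j ∈ s, F j x := by
      simp only [← sum_mul_sum_update hfi, (hF.isProbDist i _).2, mul_one]
    calc (∏ j ∈ insert i s, (Fintype.card (α j) : ℝ)) * ∑ x, f x * ∏ j ∈ insert i s, F j x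
        = (∏ j ∈ s, (Fintype.card (α j) : ℝ)) *
            (Fintype.card (α i) * ∑ x, (f x * ∏ j ∈ s, F j x) * F i x) := by
          simp only [Finset.prod_insert his, mul_assoc, mul_left_comm, mul_comm]
      _ = ∑ x, f x := by rw [hsum, ih (hf.mono (by simp))]

variable [∀ i, Nonempty (α i)]

theorem isProbDist_prod (hF : IsSequentialKernel F) : IsProbDist fun x ↦ ∏ i, F i x := by
  refine ⟨fun x ↦ Finset.prod_nonneg fun i _ ↦ hF.nonneg i x, ?_⟩
  have h := hF.prod_card_mul_sum_mul_prod Finset.univ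
    ((dependsOn_const (1 : ℝ)).mono (Set.empty_subset _))
  have hcard : ∏ i, (Fintype.card (α i) : ℝ) ≠ 0 :=
    Finset.prod_ne_zero_iff.2 fun i _ ↦ Nat.cast_ne_zero.2 Fintype.card_ne_zero
  refine mul_left_cancel₀ hcard ?_
  simpa using h

theorem sum_mul_prod_nonpos (hF : IsSequentialKernel F) {i : ι} {f : (∀ i, α i) → ℝ}
    (hf : DependsOn f (Set.Iic i))
    (hcond : ∀ x, ∑ a, f (Function.update x i a) * F i (Function.update x i a) ≤ 0) :
    ∑ x, f x * ∏ j, F j x ≤ 0 := by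
  have hpast : DependsOn (fun x ↦ ∏ j with j < i, F j x) (Set.Iio i) :=
    dependsOn_prod _ fun j hj ↦
      (hF.dependsOn j).mono (Set.Iic_subset_Iio.2 (Finset.mem_filter.1 hj).2)
  have hpresent : Fintype.card (α i) * ∑ x, (∏ j with j < i, F j x) * (f x * F i x) ≤ 0 := by
    rw [← sum_mul_sum_update (hpast.mono fun _ ↦ ne_of_lt)]
    exact Finset.sum_nonpos fun x _ ↦
      mul_nonpos_of_nonneg_of_nonpos (Finset.prod_nonneg fun j _ ↦ hF.nonneg j x) (hcond x)
  have hfuture : (∏ j with i < j, (Fintype.card (α j) : ℝ)) * ∑ x, f x * ∏ j, F j x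
      = ∑ x, (∏ j with j < i, F j x) * (f x * F i x) := by
    have hdep : DependsOn (fun x ↦ (∏ j with j < i, F j x) * (f x * F i x))
        (Finset.univ.filter (i < ·) : Set ι)ᶜ :=
      (dependsOn_mul (hpast.mono Set.Iio_subset_Iic_self)
        (dependsOn_mul hf (hF.dependsOn i))).mono fun j (hj : j ≤ i) ↦ by simpa using hj
    rw [← hF.prod_card_mul_sum_mul_prod _ hdep]
    simp only [prod_eq_prod_lt_mul_mul_prod_gt i, mul_assoc, mul_left_comm]
  have hcard : 0 < Fintype.card (α i) * ∏ j with i < j, (Fintype.card (α j) : ℝ) := by positivity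
  refine nonpos_of_mul_nonpos_right ?_ hcard
  rwa [mul_assoc, hfuture]

theorem sum_sq_max_one_sub_prod_div_mul_le (hF : IsSequentialKernel F)
    (hG : IsSequentialKernel G) (s : Finset ι) :
    ∑ x, max (1 - ∏ j ∈ s, G j x / F j x) 0 ^ 2 * ∏ j, F j x
      ≤ ∑ i ∈ s, ∑ x, condMaxChiSq F G i x * ∏ j, F j x := by
  induction s using Finset.induction_on_max with
  | empty => simp
  | insert i s hi ih =>
    have his : i ∉ s := fun h ↦ (hi i h).false
    let M : (∀ i, α i) → ℝ := fun x ↦ ∏ j ∈ s, G j x / F j x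
    have hM : DependsOn M (Set.Iio i) := dependsOn_prod s fun j hj ↦
      (dependsOn_div (hG.dependsOn j) (hF.dependsOn j)).mono (Set.Iic_subset_Iio.2 (hi j hj))
    have hM_nonneg (x : ∀ i, α i) : 0 ≤ M x :=
      Finset.prod_nonneg fun j _ ↦ div_nonneg (hG.nonneg j x) (hF.nonneg j x)
    let excess (x : ∀ i, α i) : ℝ :=
      max (1 - M x * (G i x / F i x)) 0 ^ 2 - (max (1 - M x) 0 ^ 2 + condMaxChiSq F G i x)
    have hexcess : ∑ x, excess x * ∏ j, F j x ≤ 0 := by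
      refine hF.sum_mul_prod_nonpos (i := i) (fun x y hxy ↦ ?_) fun x ↦ ?_
      · simp only [excess, hM fun j hj ↦ hxy j hj.le, hF.dependsOn i hxy, hG.dependsOn i hxy,
          hF.dependsOn_condMaxChiSq hG i fun j hj ↦ hxy j hj.le]
      · have hM_update := apply_update_of_dependsOn hM Set.self_notMem_Iio x
        have hcond_update := apply_update_of_dependsOn
          (hF.dependsOn_condMaxChiSq hG i) Set.self_notMem_Iio x
        simp only [excess, hM_update, hcond_update, sub_mul, Finset.sum_sub_distrib,
          ← Finset.mul_sum, (hF.isProbDist i x).2, mul_one, sub_nonpos]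
        exact sum_sq_max_one_sub_mul_div_mul_le (hF.isProbDist i x) (hG.isProbDist i x)
          (hM_nonneg x)
    simp only [excess, sub_mul, add_mul, Finset.sum_sub_distrib, Finset.sum_add_distrib] at hexcess
    simp only [Finset.prod_insert his, Finset.sum_insert his, mul_comm (G i _ / _)]
    linarith

theorem dTV_prod_sq_le (hF : IsSequentialKernel F) (hG : IsSequentialKernel G) :
    dTV (fun x ↦ ∏ i, F i x) (fun x ↦ ∏ i, G i x) ^ 2
      ≤ ∑ i, ∑ x, condMaxChiSq F G i x * ∏ j, F j x := by
  refine (dTV_sq_le_sum_sq_max_one_sub_div hF.isProbDist_prod hG.isProbDist_prod).trans ?_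
  simpa only [Finset.prod_div_distrib] using hF.sum_sq_max_one_sub_prod_div_mul_le hG Finset.univ

end IsSequentialKernel

section BayesianNetwork

/-- The mass function of the Bernoulli distribution on `{0, 1}` with success parameter `p`. -/
noncomputable def bernoulliMass (p : ℝ) (b : Bool) : ℝ :=
  if b then p else 1 - p

theorem isProbDist_bernoulliMass {p : ℝ} (hp : p ∈ Set.Icc 0 1) :
    IsProbDist (bernoulliMass p) := by
  refine ⟨fun b ↦ ?_, by simp [bernoulliMass]⟩
  cases b
  · simpa [bernoulliMass] using hp.2
  · simpa [bernoulliMass] using hp.1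

theorem le_max_of_mem_Icc_or_mem_Icc {c a b : ℝ}
    (h : a ∈ Set.Icc c (1 - c) ∨ b ∈ Set.Icc c (1 - c)) :
    c ≤ max a b ∧ c ≤ max (1 - a) (1 - b) :=
  ⟨le_max_iff.2 (h.imp And.left And.left),
    le_max_iff.2 (h.imp (fun ha ↦ le_sub_comm.1 ha.2) fun hb ↦ le_sub_comm.1 hb.2)⟩

theorem maxChiSq_bernoulliMass_le {c p q : ℝ} (hc : 0 < c) (hone : c ≤ max p q)
    (hzero : c ≤ max (1 - p) (1 - q)) :
    maxChiSq (bernoulliMass p) (bernoulliMass q) ≤ 2 / c * (p - q) ^ 2 := by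
  calc maxChiSq (bernoulliMass p) (bernoulliMass q)
      = (p - q) ^ 2 / max p q + (p - q) ^ 2 / max (1 - p) (1 - q) := by
        have hsq : (q - p) ^ 2 = (p - q) ^ 2 := by ring
        simp [maxChiSq, bernoulliMass, hsq]
    _ ≤ (p - q) ^ 2 / c + (p - q) ^ 2 / c := by gcongr
    _ = 2 / c * (p - q) ^ 2 := by ring

variable {d : ℕ} {Par : Fin d → Finset (Fin d)}

/-- The conditional probabilities of the Bayesian network `bnDist Par p`: the factor of coordinate
`i` is the probability that it takes the value `x i` given its parents. -/
noncomputable def bnKernel (Par : Fin d → Finset (Fin d)) (p : BNIdx d Par → ℝ) (i : Fin d)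
    (x : Fin d → Bool) : ℝ :=
  bernoulliMass (p ⟨i, cfgOf Par x i⟩) (x i)

theorem dependsOn_cfgOf (hpar : ∀ i : Fin d, ∀ j ∈ Par i, j < i) (i : Fin d) :
    DependsOn (fun x ↦ cfgOf Par x i) (Set.Iio i) :=
  fun _ _ hxy ↦ funext fun j ↦ hxy j (hpar i j j.2)

theorem bnKernel_update (hpar : ∀ i : Fin d, ∀ j ∈ Par i, j < i) (p : BNIdx d Par → ℝ) (i : Fin d)
    (x : Fin d → Bool) (b : Bool) :
    bnKernel Par p i (Function.update x i b) = bernoulliMass (p ⟨i, cfgOf Par x i⟩) b := by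
  rw [bnKernel, apply_update_of_dependsOn (dependsOn_cfgOf hpar i) Set.self_notMem_Iio,
    Function.update_self]

theorem isSequentialKernel_bnKernel (hpar : ∀ i : Fin d, ∀ j ∈ Par i, j < i)
    {p : BNIdx d Par → ℝ} (hp : ∀ k, p k ∈ Set.Icc 0 1) :
    IsSequentialKernel (bnKernel Par p) where
  dependsOn i x y hxy := by
    have hcfg : cfgOf Par x i = cfgOf Par y i :=
      dependsOn_cfgOf hpar i fun j (hj : j < i) ↦ hxy j hj.le
    rw [bnKernel, bnKernel, hcfg, hxy i Set.self_mem_Iic]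
  isProbDist i x := by
    simpa only [bnKernel_update hpar] using isProbDist_bernoulliMass (hp _)

theorem condMaxChiSq_bnKernel (hpar : ∀ i : Fin d, ∀ j ∈ Par i, j < i) (p q : BNIdx d Par → ℝ)
    (i : Fin d) (x : Fin d → Bool) :
    condMaxChiSq (bnKernel Par p) (bnKernel Par q) i x
      = maxChiSq (bernoulliMass (p ⟨i, cfgOf Par x i⟩))
          (bernoulliMass (q ⟨i, cfgOf Par x i⟩)) := by
  simp only [condMaxChiSq, bnKernel_update hpar]

theorem sum_prCfg_mul (R : (Fin d → Bool) → ℝ) (g : BNIdx d Par → ℝ) :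
    ∑ k, prCfg Par R k * g k = ∑ i, ∑ x, g ⟨i, cfgOf Par x i⟩ * R x := by
  rw [Fintype.sum_sigma]
  refine Finset.sum_congr rfl fun i _ ↦ ?_
  simp only [prCfg, Finset.sum_mul]
  rw [Finset.sum_comm]
  simp [ite_mul, mul_comm]

theorem dTV_bnDist_sq_le (hpar : ∀ i : Fin d, ∀ j ∈ Par i, j < i) {p q : BNIdx d Par → ℝ}
    (hp : ∀ k, p k ∈ Set.Icc 0 1) (hq : ∀ k, q k ∈ Set.Icc 0 1) :
    dTV (bnDist Par p) (bnDist Par q) ^ 2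
      ≤ ∑ k, prCfg Par (bnDist Par p) k
          * maxChiSq (bernoulliMass (p k)) (bernoulliMass (q k)) := by
  rw [sum_prCfg_mul]
  simp only [← condMaxChiSq_bnKernel hpar]
  exact (isSequentialKernel_bnKernel hpar hp).dTV_prod_sq_le (isSequentialKernel_bnKernel hpar hq)

theorem prCfg_nonneg {R : (Fin d → Bool) → ℝ} (hR : ∀ x, 0 ≤ R x) (k : BNIdx d Par) :
    0 ≤ prCfg Par R k :=
  Finset.sum_nonneg fun x _ ↦ ite_nonneg (hR x) le_rfl

theorem isProbDist_bnDist (hpar : ∀ i : Fin d, ∀ j ∈ Par i, j < i) {p : BNIdx d Par → ℝ}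
    (hp : ∀ k, p k ∈ Set.Icc 0 1) : IsProbDist (bnDist Par p) :=
  (isSequentialKernel_bnKernel hpar hp).isProbDist_prod

theorem tv_le_of_balanced_and_min_config_prob_general {d : ℕ} {Par : Fin d → Finset (Fin d)}
    (hpar : ∀ i : Fin d, ∀ j ∈ Par i, j < i) {c : ℝ} (hc : 0 < c) {p q : BNIdx d Par → ℝ}
    (hp : ∀ k, p k ∈ Set.Icc 0 1) (hq : ∀ k, q k ∈ Set.Icc 0 1)
    (hbal : ∀ k, c ≤ max (p k) (q k) ∧ c ≤ max (1 - p k) (1 - q k)) :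
    dTV (bnDist Par p) (bnDist Par q)
      ≤ √(2 / c * ∑ k, prCfg Par (bnDist Par p) k * (p k - q k) ^ 2) := by
  refine Real.le_sqrt_of_sq_le ?_
  calc dTV (bnDist Par p) (bnDist Par q) ^ 2
      ≤ ∑ k, prCfg Par (bnDist Par p) k
          * maxChiSq (bernoulliMass (p k)) (bernoulliMass (q k)) := dTV_bnDist_sq_le hpar hp hq
    _ ≤ ∑ k, prCfg Par (bnDist Par p) k * (2 / c * (p k - q k) ^ 2) := by
        gcongr with k
        · exact prCfg_nonneg (isProbDist_bnDist hpar hp).1 k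
        · exact maxChiSq_bernoulliMass_le hc (hbal k).1 (hbal k).2
    _ = 2 / c * ∑ k, prCfg Par (bnDist Par p) k * (p k - q k) ^ 2 := by
        simp only [Finset.mul_sum, mul_left_comm]

end BayesianNetwork

theorem tv_le_of_balanced_and_min_config_prob
    (d : ℕ) (hd : 1 ≤ d) (Par : Fin d → Finset (Fin d))
    (hpar : ∀ i : Fin d, ∀ j ∈ Par i, j < i)
    (ε c : ℝ) (hε : 0 < ε) (hc : c ∈ Set.Ioc (0:ℝ) (1/2))
    (p q : BNIdx d Par → ℝ)
    (hp : ∀ k, p k ∈ Set.Icc (0:ℝ) 1) (hq : ∀ k, q k ∈ Set.Icc (0:ℝ) 1)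
    (hmin : ∀ k, 2 * ε ≤ prCfg Par (bnDist Par p) k)
    (hbal : (∀ k, p k ∈ Set.Icc c (1 - c)) ∨ (∀ k, q k ∈ Set.Icc c (1 - c)))
    (hsum : (3 / c) * Real.sqrt (∑ k : BNIdx d Par,
        prCfg Par (bnDist Par p) k * (p k - q k) ^ 2) ≤ ε) :
    dTV (bnDist Par p) (bnDist Par q) ≤ ε := by
  have hbal_max (k : BNIdx d Par) := le_max_of_mem_Icc_or_mem_Icc (hbal.imp (· k) (· k))
  exact (tv_le_of_balanced_and_min_config_prob_general hpar hc.1 hp hq hbal_max).trans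
    ((sqrt_two_div_mul_le_three_div_mul_sqrt hc _).trans hsum)
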